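/- arXiv:2006.02325 — 2 statements merged into one kernel-verified Lean document; each statement's English description precedes it below -/
import Mathlib

section
/- Let n ≥ 2 and 0 ≤ l < k-1 with k ≤ n. Let A and B be real symmetric n×n matrices such that A is negative semidefinite, B ∈ Γ_{k-1}, and A + B ∈ Γ_{k-1}. Then (σ_{k-1}(A+B)/σ_l(A+B))^{1/(k-1-l)} ≤ (σ_{k-1}(B)/σ_l(B))^{1/(k-1-l)}. -/
/-!
The statement follows from monotonicity of `σ_{k-1}/σ_l` in each eigenvalue on `Γ_{k-1}`.

* Since `B - (A + B) = -A` is positive semidefinite, Weyl's monotonicity principle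
  (`eigenvalues_mono`) bounds each decreasingly ordered eigenvalue of `A + B` by the
  corresponding eigenvalue of `B`.
* Write `σ_j(λ) = σ_j(λ|i) + λ_i σ_{j-1}(λ|i)`. The derivative of `σ_{j+1}/σ_j` in `λ_i` has the
  sign of `σ_j(λ|i)² - σ_{j-1}(λ|i) σ_{j+1}(λ|i)`, which is nonnegative by Newton's inequality
  (`esymmOn_newton`). Newton's inequality also shows that `σ_j(λ|i) > 0` for `j < m` on `Γ_m`
  (`esymmOn_pos_of_insert`), so raising `λ_i` does not leave the cone. Raising the coordinates one
  at a time and telescoping `σ_m/σ_l = ∏ σ_{j+1}/σ_j` gives `quot_mono`.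
* Newton's inequality comes from real-rootedness of `∏ (X + λ_i)`: all its derivatives `Q` are
  real-rooted by Rolle's theorem, and real-rooted `Q` satisfies `Q Q'' ≤ Q'²` at `0`.
-/

/-- The `j`-th elementary symmetric polynomial of `lam : Fin n → ℝ`:
`σ_j(λ) = ∑_{1 ≤ i₁ < ⋯ < i_j ≤ n} λ_{i₁} ⋯ λ_{i_j}`, with `σ_0(λ) = 1`. -/
noncomputable def esymmVec (n j : ℕ) (lam : Fin n → ℝ) : ℝ :=
  ∑ S ∈ Finset.univ.powersetCard j, ∏ i ∈ S, lam i

/-- Membership in the Gårding cone `Γ_m = {λ : σ_j(λ) > 0 for all 1 ≤ j ≤ m}`. -/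
def inGamma (n m : ℕ) (lam : Fin n → ℝ) : Prop :=
  ∀ j : ℕ, 1 ≤ j → j ≤ m → 0 < esymmVec n j lam

/-! ### Newton's inequality for real-rooted polynomials -/

open Polynomial in
/-- A real-rooted polynomial satisfies `Q Q'' ≤ Q'²` pointwise (log-concavity of `|Q|` between
its roots). -/
lemma splits_logConcave (s : Multiset ℝ) (x : ℝ) :
    ((s.map fun a => X - C a).prod).eval x *
        (derivative (derivative (s.map fun a => X - C a).prod)).eval x
      ≤ ((derivative (s.map fun a => X - C a).prod).eval x) ^ 2 := by
  induction s using Multiset.induction_on with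
  | empty => simp
  | cons a s ih =>
    simp only [Multiset.map_cons, Multiset.prod_cons, derivative_mul, derivative_add,
      derivative_sub, derivative_X, derivative_C, eval_mul, eval_add, eval_sub, eval_X, eval_C,
      sub_zero, one_mul]
    generalize (s.map fun a => X - C a).prod = Q at *
    nlinarith [mul_nonneg (sq_nonneg (x - a)) (sub_nonneg.2 ih), sq_nonneg (eval x Q)]

open Polynomial in
/-- By Rolle's theorem differentiation loses at most one root, counted with multiplicity. -/
lemma splits_derivative {p : ℝ[X]} (hp : p.Splits) : (derivative p).Splits := by
  rw [splits_iff_card_roots] at hp ⊢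
  have h1 := card_roots_le_derivative p
  have h2 := natDegree_derivative_le p
  have h3 := card_roots' (derivative p)
  omega

open Polynomial in
lemma splits_iterate_derivative {p : ℝ[X]} (hp : p.Splits) (r : ℕ) :
    (derivative^[r] p).Splits := by
  induction r with
  | zero => exact hp
  | succ r ih => rw [Function.iterate_succ_apply']; exact splits_derivative ih

open Polynomial in
/-- Newton's inequality, in its weak form, for the coefficients of a real-rooted polynomial:
apply `splits_logConcave` at `0` to the `r`-th derivative. -/
lemma splits_newton {p : ℝ[X]} (hp : p.Splits) (r : ℕ) :
    p.coeff r * p.coeff (r + 2) ≤ p.coeff (r + 1) ^ 2 := by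
  have hQ := splits_iterate_derivative hp r
  have key : (derivative^[r] p).eval 0 * (derivative (derivative (derivative^[r] p))).eval 0
      ≤ ((derivative (derivative^[r] p)).eval 0) ^ 2 := by
    generalize derivative^[r] p = Q at hQ
    have h := hQ.eq_prod_roots
    have h2 := splits_logConcave Q.roots 0
    generalize (Q.roots.map fun a => X - C a).prod = R at h h2
    generalize Q.leadingCoeff = c at h
    subst h
    simp only [derivative_C_mul, eval_mul, eval_C]
    nlinarith [mul_nonneg (sq_nonneg c) (sub_nonneg.2 h2)]
  rw [← Function.iterate_succ_apply' derivative, ← Function.iterate_succ_apply' derivative,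
    ← coeff_zero_eq_eval_zero, ← coeff_zero_eq_eval_zero, ← coeff_zero_eq_eval_zero,
    coeff_iterate_derivative, coeff_iterate_derivative, coeff_iterate_derivative] at key
  simp only [zero_add, Nat.descFactorial_self, nsmul_eq_mul, Nat.factorial_succ] at key
  push_cast at key
  have hf : (0 : ℝ) < r.factorial := by positivity
  have hr : (0 : ℝ) ≤ r := by positivity
  -- after dividing by `r!² (r + 1)` this reads `(r + 2) c_r c_{r+2} ≤ (r + 1) c_{r+1}²`
  have key2 : ((r : ℝ) + 2) * (p.coeff r * p.coeff (r + 2)) ≤ (r + 1) * p.coeff (r + 1) ^ 2 := by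
    have hpos : 0 < (r.factorial : ℝ) ^ 2 * (r + 1) := by positivity
    refine le_of_mul_le_mul_left ?_ hpos
    rw [show r.succ.succ = r + 2 from rfl, show r.succ = r + 1 from rfl] at key
    linear_combination key
  by_contra! hcon
  nlinarith [sq_nonneg (p.coeff (r + 1))]

/-! ### Elementary symmetric polynomials and the Gårding cone -/

/-- The elementary symmetric polynomial of degree `j` in the variables indexed by `s`. Taking
`s = univ \ {i}` gives the usual `σ_j(λ | i)`. -/
noncomputable def esymmOn {ι : Type*} (s : Finset ι) (j : ℕ) (lam : ι → ℝ) : ℝ :=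
  ∑ S ∈ s.powersetCard j, ∏ i ∈ S, lam i

lemma esymmOn_zero {ι : Type*} (s : Finset ι) (lam : ι → ℝ) : esymmOn s 0 lam = 1 := by
  simp [esymmOn]

lemma esymmOn_insert {ι : Type*} [DecidableEq ι] {s : Finset ι} {i : ι} (hi : i ∉ s) (j : ℕ)
    (lam : ι → ℝ) :
    esymmOn (insert i s) (j + 1) lam = esymmOn s (j + 1) lam + lam i * esymmOn s j lam := by
  have hmem : ∀ S ∈ s.powersetCard j, i ∉ S := fun S hS h =>
    hi ((Finset.mem_powersetCard.1 hS).1 h)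
  unfold esymmOn
  rw [← Nat.succ_eq_add_one, Finset.powersetCard_succ_insert hi, Finset.sum_union,
    Finset.sum_image, Finset.mul_sum]
  · congr 1
    exact Finset.sum_congr rfl fun S hS => Finset.prod_insert (hmem S hS)
  · intro S hS T hT h
    rw [← Finset.erase_insert (hmem S hS), ← Finset.erase_insert (hmem T hT)]
    exact congrArg (fun U => U.erase i) h
  · rw [Finset.disjoint_left]
    intro S hS hS'
    obtain ⟨T, -, rfl⟩ := Finset.mem_image.1 hS'
    exact hi ((Finset.mem_powersetCard.1 hS).1 (Finset.mem_insert_self i T))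

lemma esymmOn_congr {ι : Type*} {s : Finset ι} {lam mu : ι → ℝ} (h : ∀ i ∈ s, lam i = mu i)
    (j : ℕ) : esymmOn s j lam = esymmOn s j mu :=
  Finset.sum_congr rfl fun _ hS =>
    Finset.prod_congr rfl fun i hi => h i ((Finset.mem_powersetCard.1 hS).1 hi)

open Polynomial in
/-- Newton's inequality `e_j e_{j+2} ≤ e_{j+1}²`, valid for arbitrary real variables. -/
lemma esymmOn_newton {ι : Type*} (s : Finset ι) (lam : ι → ℝ) (j : ℕ) :
    esymmOn s j lam * esymmOn s (j + 2) lam ≤ esymmOn s (j + 1) lam ^ 2 := by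
  by_cases hj : j + 2 ≤ s.card
  · have hs : (∏ i ∈ s, (X + C (lam i))).Splits :=
      Splits.prod fun i _ => Splits.X_add_C (lam i)
    have h := splits_newton hs (s.card - (j + 2))
    rw [Finset.prod_X_add_C_coeff _ _ (by omega), Finset.prod_X_add_C_coeff _ _ (by omega),
      Finset.prod_X_add_C_coeff _ _ (by omega),
      show s.card - (s.card - (j + 2)) = j + 2 by omega,
      show s.card - (s.card - (j + 2) + 2) = j by omega,
      show s.card - (s.card - (j + 2) + 1) = j + 1 by omega] at h
    unfold esymmOn
    linarith
  · have h0 : esymmOn s (j + 2) lam = 0 := by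
      unfold esymmOn
      rw [Finset.powersetCard_eq_empty.2 (by omega), Finset.sum_empty]
    rw [h0, mul_zero]
    positivity

/-- If `λ ∈ Γ_m` then `σ_j(λ | i) > 0` for `j < m`. At the first `j` where this fails, the
positivity of `σ_j(λ)` and `σ_{j+1}(λ)` contradicts Newton's inequality for `λ | i`. -/
lemma esymmOn_pos_of_insert {ι : Type*} [DecidableEq ι] {s : Finset ι} {i : ι} (hi : i ∉ s)
    {lam : ι → ℝ} {m : ℕ} (h : ∀ j, 1 ≤ j → j ≤ m → 0 < esymmOn (insert i s) j lam) (j : ℕ)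
    (hj : j < m) : 0 < esymmOn s j lam := by
  induction j with
  | zero => rw [esymmOn_zero]; exact one_pos
  | succ j ih =>
    have ha := ih (by omega)
    have h1 := h (j + 1) (by omega) (by omega)
    have h2 := h (j + 2) (by omega) (by omega)
    rw [esymmOn_insert hi] at h1 h2
    have hN := esymmOn_newton s lam j
    by_contra! hb
    generalize esymmOn s j lam = a at *
    rw [show j + 1 + 1 = j + 2 from rfl] at h2
    generalize esymmOn s (j + 1) lam = b at *
    generalize esymmOn s (j + 2) lam = c at *
    nlinarith [mul_pos ha h2, mul_nonneg (neg_nonneg.2 hb) h1.le]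

/-- Raising one variable keeps `λ` in `Γ_m` and does not decrease any of the quotients
`σ_{j+1} / σ_j` with `j < m`. -/
lemma esymmOn_step {ι : Type*} [DecidableEq ι] {s : Finset ι} {i : ι} (hi : i ∉ s)
    {lam mu : ι → ℝ} {m : ℕ} (h : ∀ j, 1 ≤ j → j ≤ m → 0 < esymmOn (insert i s) j lam)
    (hle : lam i ≤ mu i) (heq : ∀ k ∈ s, lam k = mu k) :
    (∀ j, 1 ≤ j → j ≤ m → 0 < esymmOn (insert i s) j mu) ∧
    ∀ j < m, esymmOn (insert i s) (j + 1) lam * esymmOn (insert i s) j mu ≤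
      esymmOn (insert i s) (j + 1) mu * esymmOn (insert i s) j lam := by
  have hpos := esymmOn_pos_of_insert hi h
  have hmu : ∀ j, esymmOn (insert i s) (j + 1) mu =
      esymmOn s (j + 1) lam + mu i * esymmOn s j lam := fun j => by
    rw [esymmOn_insert hi, esymmOn_congr heq, esymmOn_congr heq]
  constructor
  · intro j h1 hj
    obtain ⟨j, rfl⟩ := Nat.exists_eq_add_of_le' h1
    have := h (j + 1) h1 hj
    rw [esymmOn_insert hi] at this
    rw [hmu]
    nlinarith [mul_le_mul_of_nonneg_right hle (hpos j (by omega)).le]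
  · intro j hj
    rw [hmu, esymmOn_insert hi]
    cases j with
    | zero =>
      simp only [esymmOn_zero, zero_add, mul_one]
      linarith
    | succ j =>
      rw [hmu, esymmOn_insert hi]
      have hN := esymmOn_newton s lam j
      rw [show j + 1 + 1 = j + 2 from rfl]
      -- the difference of the two sides is `(μ_i - λ_i) (σ_{j+1}² - σ_j σ_{j+2})(λ | i)`
      nlinarith [mul_nonneg (sub_nonneg.2 hle) (sub_nonneg.2 hN)]

lemma esymmVec_eq (n j : ℕ) (lam : Fin n → ℝ) : esymmVec n j lam = esymmOn Finset.univ j lam :=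
  rfl

lemma inGamma_pos {n m : ℕ} {lam : Fin n → ℝ} (h : inGamma n m lam) {j : ℕ} (hj : j ≤ m) :
    0 < esymmVec n j lam := by
  rcases Nat.eq_zero_or_pos j with rfl | h0
  · rw [esymmVec_eq, esymmOn_zero]; exact one_pos
  · exact h j h0 hj

/-- Changing the coordinates in `T` from `λ` to `μ ≥ λ` one at a time increases all quotients
`σ_{j+1} / σ_j`. -/
lemma quot_succ_mono_piecewise {n m : ℕ} {lam mu : Fin n → ℝ} (hG : inGamma n m lam)
    (hle : ∀ i, lam i ≤ mu i) (T : Finset (Fin n)) :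
    inGamma n m (T.piecewise mu lam) ∧ ∀ j < m,
      esymmVec n (j + 1) lam / esymmVec n j lam ≤
        esymmVec n (j + 1) (T.piecewise mu lam) / esymmVec n j (T.piecewise mu lam) := by
  induction T using Finset.induction_on with
  | empty => simpa using hG
  | insert i T hi ih =>
    obtain ⟨ihG, ihq⟩ := ih
    have huniv : insert i (Finset.univ.erase i) = (Finset.univ : Finset (Fin n)) :=
      Finset.insert_erase (Finset.mem_univ i)
    have hstep := esymmOn_step (s := Finset.univ.erase i) (i := i) (m := m)
      (lam := T.piecewise mu lam) (mu := (insert i T).piecewise mu lam) (by simp)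
      (by rw [huniv]; exact ihG) (by simpa [hi] using hle i)
      (fun k hk => by
        have : k ≠ i := Finset.ne_of_mem_erase hk
        simp [Finset.piecewise, this])
    rw [huniv] at hstep
    refine ⟨hstep.1, fun j hj => (ihq j hj).trans ?_⟩
    rw [div_le_div_iff₀ (inGamma_pos ihG hj.le) (inGamma_pos hstep.1 hj.le)]
    exact hstep.2 j hj

/-- On `Γ_m` the quotient `σ_j / σ_l` is nondecreasing in each variable for `l ≤ j ≤ m`. -/
lemma quot_mono {n m : ℕ} {lam mu : Fin n → ℝ} (hG : inGamma n m lam)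
    (hle : ∀ i, lam i ≤ mu i) (l j : ℕ) (hlj : l ≤ j) (hj : j ≤ m) :
    esymmVec n j lam / esymmVec n l lam ≤ esymmVec n j mu / esymmVec n l mu := by
  obtain ⟨hG', hq⟩ := quot_succ_mono_piecewise hG hle Finset.univ
  rw [Finset.piecewise_univ] at hG' hq
  induction j, hlj using Nat.le_induction with
  | base => rw [div_self (inGamma_pos hG hj).ne', div_self (inGamma_pos hG' hj).ne']
  | succ j hlj ih =>
    have hl := inGamma_pos hG (show l ≤ m by omega)
    have hl' := inGamma_pos hG' (show l ≤ m by omega)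
    have hj0 := inGamma_pos hG (show j ≤ m by omega)
    have hj0' := inGamma_pos hG' (show j ≤ m by omega)
    have hj1' := inGamma_pos hG' hj
    have tel : ∀ a b c : ℝ, b ≠ 0 → a / c = a / b * (b / c) := fun a b c hb => by field_simp
    rw [tel _ _ _ hj0.ne', tel (esymmVec n (j + 1) mu) _ _ hj0'.ne']
    exact mul_le_mul (hq j (by omega)) (ih (by omega)) (by positivity) (by positivity)

/-! ### Weyl monotonicity of eigenvalues -/

open Matrix in
/-- The quadratic form of `M` in an orthonormal basis of eigenvectors. -/
lemma inner_toEuclideanLin_eq {n : ℕ} {M : Matrix (Fin n) (Fin n) ℝ} (hM : M.IsHermitian)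
    (v : EuclideanSpace ℝ (Fin n)) :
    inner ℝ v (toEuclideanLin M v) =
      ∑ j, hM.eigenvalues j * inner ℝ (hM.eigenvectorBasis j) v ^ 2 := by
  rw [← hM.eigenvectorBasis.sum_inner_mul_inner]
  refine Finset.sum_congr rfl fun j _ => ?_
  have hs := isSymmetric_toEuclideanLin_iff.mpr hM
  have he : toEuclideanLin M (hM.eigenvectorBasis j) =
      hM.eigenvalues j • hM.eigenvectorBasis j := by
    rw [toLpLin_apply, hM.mulVec_eigenvectorBasis]
    rfl
  rw [← hs, he, inner_smul_left, real_inner_comm]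
  simp
  ring

open Matrix in
/-- Weyl monotonicity of eigenvalues. By a dimension count there is `v ≠ 0` orthogonal to the
eigenvectors of `M` after the `i`-th and to those of `N` before the `i`-th; the two quadratic
forms at `v` then separate the `i`-th eigenvalues. -/
lemma eigenvalues_mono {n : ℕ} {M N : Matrix (Fin n) (Fin n) ℝ} (hM : M.IsHermitian)
    (hN : N.IsHermitian) (hMN : (N - M).PosSemidef) (i : Fin n) :
    hM.eigenvalues i ≤ hN.eigenvalues i := by
  -- `f` is the position of an index in the decreasing order of the eigenvalues
  let f : Fin n → Fin (Fintype.card (Fin n)) := (Fintype.equivOfCardEq (Fintype.card_fin _)).symm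
  have hf : Function.Injective f := Equiv.injective _
  have hMf : ∀ j k, f j ≤ f k → hM.eigenvalues k ≤ hM.eigenvalues j :=
    fun j k h => hM.eigenvalues₀_antitone h
  have hNf : ∀ j k, f j ≤ f k → hN.eigenvalues k ≤ hN.eigenvalues j :=
    fun j k h => hN.eigenvalues₀_antitone h
  let L : EuclideanSpace ℝ (Fin n) →ₗ[ℝ] ({j : Fin n // j ≠ i} → ℝ) :=
    LinearMap.pi fun j => if f i < f j then innerₗ _ (hM.eigenvectorBasis j)
      else innerₗ _ (hN.eigenvectorBasis j)
  have hker : LinearMap.ker L ≠ ⊥ := by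
    apply LinearMap.ker_ne_bot_of_finrank_lt
    have : 0 < n := i.pos
    simp
    omega
  obtain ⟨v, hv, hv0⟩ := Submodule.exists_mem_ne_zero_of_ne_bot hker
  have hLv : ∀ j : {j : Fin n // j ≠ i}, L v j = 0 := fun j => congrFun (LinearMap.mem_ker.1 hv) j
  have hv1 : ∀ j, f i < f j → inner ℝ (hM.eigenvectorBasis j) v = 0 := fun j hj => by
    have := hLv ⟨j, fun h => by simp [h] at hj⟩
    simpa [L, hj] using this
  have hv2 : ∀ j, f j < f i → inner ℝ (hN.eigenvectorBasis j) v = 0 := fun j hj => by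
    have := hLv ⟨j, fun h => by simp [h] at hj⟩
    simpa [L, hj.not_gt] using this
  have sum1 : ∑ j, inner ℝ (hM.eigenvectorBasis j) v ^ 2 = ‖v‖ ^ 2 := by
    simpa using hM.eigenvectorBasis.sum_sq_norm_inner_right v
  have sum2 : ∑ j, inner ℝ (hN.eigenvectorBasis j) v ^ 2 = ‖v‖ ^ 2 := by
    simpa using hN.eigenvectorBasis.sum_sq_norm_inner_right v
  have b1 : hM.eigenvalues i * ‖v‖ ^ 2 ≤ inner ℝ v (toEuclideanLin M v) := by
    rw [inner_toEuclideanLin_eq hM, ← sum1, Finset.mul_sum]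
    refine Finset.sum_le_sum fun j _ => ?_
    rcases le_or_gt (f j) (f i) with h | h
    · exact mul_le_mul_of_nonneg_right (hMf _ _ h) (sq_nonneg _)
    · simp [hv1 j h]
  have b2 : inner ℝ v (toEuclideanLin N v) ≤ hN.eigenvalues i * ‖v‖ ^ 2 := by
    rw [inner_toEuclideanLin_eq hN, ← sum2, Finset.mul_sum]
    refine Finset.sum_le_sum fun j _ => ?_
    rcases le_or_gt (f i) (f j) with h | h
    · exact mul_le_mul_of_nonneg_right (hNf _ _ h) (sq_nonneg _)
    · simp [hv2 j h]
  have b3 : inner ℝ v (toEuclideanLin M v) ≤ inner ℝ v (toEuclideanLin N v) := by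
    have h := hMN.isHermitian
    have h0 : 0 ≤ inner ℝ v (toEuclideanLin (N - M) v) := by
      rw [inner_toEuclideanLin_eq h]
      exact Finset.sum_nonneg fun j _ => mul_nonneg (hMN.eigenvalues_nonneg j) (sq_nonneg _)
    rw [map_sub, LinearMap.sub_apply, inner_sub_right] at h0
    linarith
  have hpos : 0 < ‖v‖ ^ 2 := by positivity
  exact le_of_mul_le_mul_right (b1.trans (b3.trans b2)) hpos

/-! ### Monotonicity of the quotient in the matrix -/

/-- Lemma (A+B), part (2), second inequality: if `A` is negative semidefinite,
`B ∈ Γ_{k-1}` and `A + B ∈ Γ_{k-1}`, then for `0 ≤ l < k-1`,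
`(σ_{k-1}/σ_l)^{1/(k-1-l)}(A+B) ≤ (σ_{k-1}/σ_l)^{1/(k-1-l)}(B)`. -/
theorem stmt_3 (n k l : ℕ) (hn : 2 ≤ n) (hl : l < k - 1) (hkn : k ≤ n)
    (A B : Matrix (Fin n) (Fin n) ℝ) (hA : A.IsHermitian) (hB : B.IsHermitian)
    (hAnsd : (-A).PosSemidef)
    (hBG : inGamma n (k - 1) hB.eigenvalues)
    (hABG : inGamma n (k - 1) (hA.add hB).eigenvalues) :
    (esymmVec n (k - 1) (hA.add hB).eigenvalues / esymmVec n l (hA.add hB).eigenvalues) ^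
        ((1 : ℝ) / ((k - 1 - l : ℕ) : ℝ)) ≤
      (esymmVec n (k - 1) hB.eigenvalues / esymmVec n l hB.eigenvalues) ^
        ((1 : ℝ) / ((k - 1 - l : ℕ) : ℝ)) := by
  have hle : ∀ i, (hA.add hB).eigenvalues i ≤ hB.eigenvalues i := fun i =>
    eigenvalues_mono (hA.add hB) hB (by simpa using hAnsd) i
  refine Real.rpow_le_rpow ?_ (quot_mono hABG hle l (k - 1) hl.le le_rfl) (by positivity)
  exact div_nonneg (inGamma_pos hABG le_rfl).le (inGamma_pos hABG hl.le).le
end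

section
/- Let n ≥ 3 and 3 ≤ k ≤ n. Let β_0, …, β_{k-2} be positive real numbers and a ∈ ℝ. Suppose λ ∈ Γ_{k-1} satisfies σ_k(λ)/σ_{k-1}(λ) − Σ_{l=0}^{k-2} β_l σ_l(λ)/σ_{k-1}(λ) = a. Then for every 0 ≤ l ≤ k-2, 0 < σ_l(λ)/σ_{k-1}(λ) ≤ max( (1 + |a|)/β_l , (C(n,k))^{k-1-l} · C(n,l) / (C(n,k-1))^{k-l} ), where C(n,j) denotes the binomial coefficient n choose j. -/
open Polynomial in
/-- Laguerre's inequality for a product of real linear factors, by induction on the number of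
factors. -/
lemma laguerre_multiset (s : Multiset ℝ) (x : ℝ) :
    (s.card : ℝ) * ((s.map fun a => X - C a).prod.eval x *
        (derivative (derivative (s.map fun a => X - C a).prod)).eval x) ≤
      ((s.card : ℝ) - 1) * (derivative (s.map fun a => X - C a).prod).eval x ^ 2 := by
  induction s using Multiset.induction_on with
  | empty => simp
  | cons r s ih =>
    rcases Nat.eq_zero_or_pos s.card with h0 | hpos
    · rw [Multiset.card_eq_zero] at h0
      subst h0
      simp
    · simp only [Multiset.map_cons, Multiset.prod_cons, Multiset.card_cons, derivative_mul,
        derivative_add, derivative_X_sub_C, one_mul, eval_add, eval_mul, eval_sub, eval_X, eval_C,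
        Nat.cast_add, Nat.cast_one]
      have hd : (0 : ℝ) < s.card := by exact_mod_cast hpos
      set d : ℝ := (s.card : ℝ)
      set g := eval x (s.map fun a => X - C a).prod
      set g' := eval x (derivative (s.map fun a => X - C a).prod)
      set g'' := eval x (derivative (derivative (s.map fun a => X - C a).prod))
      set t := x - r
      refine le_of_mul_le_mul_left ?_ hd
      -- `d` times the difference of the two sides is
      -- `(d g - t g')² + (d + 1) t² ((d - 1) g'² - d g g'')`.
      have h1 : 0 ≤ (d + 1) * t ^ 2 * ((d - 1) * g' ^ 2 - d * (g * g'')) :=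
        mul_nonneg (by positivity) (by linarith)
      nlinarith [sq_nonneg (d * g - t * g')]

open Polynomial in
lemma laguerre_splits {f : ℝ[X]} (hf : f.Splits) (x : ℝ) :
    (f.natDegree : ℝ) * (f.eval x * (derivative (derivative f)).eval x) ≤
      ((f.natDegree : ℝ) - 1) * (derivative f).eval x ^ 2 := by
  have h := mul_le_mul_of_nonneg_left (laguerre_multiset f.roots x) (sq_nonneg f.leadingCoeff)
  rw [hf.natDegree_eq_card_roots]
  have e := hf.eq_prod_roots
  set g := (f.roots.map fun a => X - C a).prod with hg
  set c := f.leadingCoeff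
  set d := f.roots.card
  have e0 : f.eval x = c * g.eval x := by rw [e]; simp
  have e1 : (derivative f).eval x = c * (derivative g).eval x := by rw [e]; simp
  have e2 : (derivative (derivative f)).eval x = c * (derivative (derivative g)).eval x := by
    rw [e]; simp
  rw [e0, e1, e2]
  linarith

open Polynomial in
/-- Rolle's theorem, counted with multiplicities: differentiation preserves splitting over `ℝ`. -/
lemma splits_derivative_s8 {f : ℝ[X]} (hf : f.Splits) : (derivative f).Splits := by
  rw [splits_iff_card_roots]
  have h1 := card_roots_le_derivative f
  have h2 := card_roots' (derivative f)
  have h3 := natDegree_derivative_le f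
  have h4 := hf.natDegree_eq_card_roots
  omega

open Polynomial in
lemma splits_iterate_derivative_s8 {f : ℝ[X]} (hf : f.Splits) (m : ℕ) :
    (derivative^[m] f).Splits ∧ (derivative^[m] f).natDegree = f.natDegree - m := by
  induction m with
  | zero => exact ⟨hf, rfl⟩
  | succ m ih =>
    rw [Function.iterate_succ_apply']
    refine ⟨splits_derivative_s8 ih.1, ?_⟩
    rw [natDegree_derivative, ih.2]
    omega

open Polynomial in
/-- Newton's inequality, with the binomial coefficients cleared (`j = i + 1` is the middle index,
`n = i + m + 2`). -/
lemma esymmVec_newton_aux (i m : ℕ) (lam : Fin (i + m + 2) → ℝ) :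
    ((i : ℝ) + 2) * (m + 2) * (esymmVec (i + m + 2) i lam * esymmVec (i + m + 2) (i + 2) lam) ≤
      ((i : ℝ) + 1) * (m + 1) * esymmVec (i + m + 2) (i + 1) lam ^ 2 := by
  set P : ℝ[X] := ∏ j : Fin (i + m + 2), (X + C (lam j)) with hP
  have hs : P.Splits := Splits.prod fun j _ => Splits.X_add_C _
  have hdeg : P.natDegree = i + m + 2 := by
    rw [hP, natDegree_prod_of_monic _ _ fun j _ => monic_X_add_C _]
    simp
  have hc (t : ℕ) (ht : t ≤ i + m + 2) :
      P.coeff t = esymmVec (i + m + 2) (i + m + 2 - t) lam := by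
    rw [hP, Finset.prod_X_add_C_coeff _ _ (by simpa using ht)]
    simp [esymmVec]
  obtain ⟨h1, h2⟩ := splits_iterate_derivative_s8 hs m
  have key := laguerre_splits h1 0
  rw [h2, hdeg, show i + m + 2 - m = i + 2 by omega] at key
  have hd (t : ℕ) (ht : t ≤ i + m + 2) : (derivative^[t] P).eval 0 =
      t.factorial * esymmVec (i + m + 2) (i + m + 2 - t) lam := by
    rw [← coeff_zero_eq_eval_zero, coeff_iterate_derivative, zero_add, Nat.descFactorial_self,
      hc t ht, nsmul_eq_mul]
  rw [← Function.iterate_succ_apply' derivative, ← Function.iterate_succ_apply' derivative,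
    hd m (by omega), hd (m + 1) (by omega), hd (m + 2) (by omega),
    show i + m + 2 - m = i + 2 by omega, show i + m + 2 - (m + 1) = i + 1 by omega,
    show i + m + 2 - (m + 2) = i by omega, Nat.factorial_succ (m + 1),
    Nat.factorial_succ m] at key
  have hf : (0 : ℝ) < (m.factorial : ℝ) ^ 2 * (m + 1) := by positivity
  refine le_of_mul_le_mul_left ?_ hf
  push_cast at key
  linarith

/-- Newton's inequality for normalized elementary symmetric polynomials of real numbers. -/
lemma esymmVec_newton (n i : ℕ) (hi : i + 2 ≤ n) (lam : Fin n → ℝ) :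
    (esymmVec n i lam / n.choose i) * (esymmVec n (i + 2) lam / n.choose (i + 2)) ≤
      (esymmVec n (i + 1) lam / n.choose (i + 1)) ^ 2 := by
  obtain ⟨m, rfl⟩ : ∃ m, n = i + m + 2 := ⟨n - i - 2, by omega⟩
  have h := esymmVec_newton_aux i m lam
  have c1 := Nat.choose_succ_right_eq (i + m + 2) i
  have c2 := Nat.choose_succ_right_eq (i + m + 2) (i + 1)
  rw [show i + m + 2 - i = m + 2 by omega] at c1
  rw [show i + m + 2 - (i + 1) = m + 1 by omega] at c2
  have p0 : (0 : ℝ) < (i + m + 2).choose i := by exact_mod_cast Nat.choose_pos (by omega)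
  have c1' : ((i + m + 2).choose (i + 1) : ℝ) * (i + 1) = (i + m + 2).choose i * (m + 2) := by
    exact_mod_cast c1
  have c2' : ((i + m + 2).choose (i + 1 + 1) : ℝ) * (i + 2) =
      (i + m + 2).choose (i + 1) * (m + 1) := by
    exact_mod_cast c2
  have e1 : ((i + m + 2).choose (i + 1) : ℝ) = (i + m + 2).choose i * (m + 2) / (i + 1) := by
    rw [eq_div_iff (by positivity)]; exact c1'
  have e2 : ((i + m + 2).choose (i + 2) : ℝ) =
      (i + m + 2).choose i * (m + 2) / (i + 1) * (m + 1) / (i + 2) := by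
    rw [eq_div_iff (by positivity), ← e1]; exact c2'
  rw [e2, e1]
  set c : ℝ := ((i + m + 2).choose i : ℝ)
  set A := esymmVec (i + m + 2) i lam
  set B := esymmVec (i + m + 2) (i + 1) lam
  set D := esymmVec (i + m + 2) (i + 2) lam
  have hpos : (0 : ℝ) ≤ (i + 1) / (c ^ 2 * (m + 2) ^ 2 * (m + 1)) := by positivity
  have := mul_le_mul_of_nonneg_left h hpos
  calc _ = (i + 1) / (c ^ 2 * (m + 2) ^ 2 * (m + 1)) *
        (((i : ℝ) + 2) * (m + 2) * (A * D)) := by field_simp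
    _ ≤ _ := this
    _ = _ := by field_simp

/-- A positive log-concave sequence whose last ratio `p q / p (q + 1)` is at most `R` grows
backwards at most geometrically with ratio `R`. -/
lemma le_pow_mul_of_logConcave (p : ℕ → ℝ) (R : ℝ) (q : ℕ) (hpos : ∀ j ≤ q + 1, 0 < p j)
    (hR : p q ≤ R * p (q + 1)) (hlc : ∀ i, i + 2 ≤ q + 1 → p i * p (i + 2) ≤ p (i + 1) ^ 2)
    (l : ℕ) (hl : l ≤ q) : p l ≤ R ^ (q - l) * p q := by
  have hR0 : 0 < R := by
    have := (hpos q (by omega)).trans_le hR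
    exact (mul_pos_iff_of_pos_right (hpos (q + 1) le_rfl)).1 this
  have ratio : ∀ j ≤ q, p j ≤ R * p (j + 1) := by
    intro j hj
    induction hj using Nat.decreasingInduction with
    | self => exact hR
    | of_succ i hi ih =>
      have h1 := hlc i (by omega)
      refine le_of_mul_le_mul_right ?_ (hpos (i + 2) (by omega))
      have h2 := mul_le_mul_of_nonneg_left ih (hpos (i + 1) (by omega)).le
      linarith
  induction hl using Nat.decreasingInduction with
  | self => simp
  | of_succ i hi ih =>
    rw [show q - i = q - (i + 1) + 1 by omega, pow_succ']
    have := mul_le_mul_of_nonneg_left ih hR0.le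
    linarith [ratio i (by omega)]

/-- Lemma 3.4: if `λ ∈ Γ_{k-1}` solves
`σ_k/σ_{k-1} - ∑_{l=0}^{k-2} β_l σ_l/σ_{k-1} = a` with all `β_l > 0`, then for
every `0 ≤ l ≤ k-2` the quotient `σ_l/σ_{k-1}` is positive and bounded above by
`max((1+|a|)/β_l, (C(n,k))^{k-1-l} C(n,l) / (C(n,k-1))^{k-l})`. -/
theorem stmt_8 (n k : ℕ) (hn : 3 ≤ n) (hk3 : 3 ≤ k) (hkn : k ≤ n)
    (β : ℕ → ℝ) (hβ : ∀ l ≤ k - 2, 0 < β l) (a : ℝ)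
    (lam : Fin n → ℝ) (hG : inGamma n (k - 1) lam)
    (heq : esymmVec n k lam / esymmVec n (k - 1) lam -
        ∑ l ∈ Finset.range (k - 1), β l * (esymmVec n l lam / esymmVec n (k - 1) lam) = a) :
    ∀ l ≤ k - 2,
      0 < esymmVec n l lam / esymmVec n (k - 1) lam ∧
        esymmVec n l lam / esymmVec n (k - 1) lam ≤
          max ((1 + |a|) / β l)
            ((n.choose k : ℝ) ^ (k - 1 - l) * (n.choose l : ℝ) /
              (n.choose (k - 1) : ℝ) ^ (k - l)) := by
  have hpos : ∀ j ≤ k - 1, 0 < esymmVec n j lam := by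
    intro j hj
    rcases Nat.eq_zero_or_pos j with rfl | h
    · simp [esymmVec]
    · exact hG j h hj
  have hq := hpos (k - 1) le_rfl
  intro l hl
  refine ⟨div_pos (hpos l (by omega)) hq, ?_⟩
  rcases le_or_gt (esymmVec n k lam) (esymmVec n (k - 1) lam) with hle | hgt
  · refine le_max_of_le_left ?_
    rw [le_div_iff₀ (hβ l hl), mul_comm]
    have h1 := Finset.single_le_sum
      (f := fun l => β l * (esymmVec n l lam / esymmVec n (k - 1) lam))
      (fun j hj => by
        rw [Finset.mem_range] at hj
        exact mul_nonneg (hβ j (by omega)).le (div_pos (hpos j (by omega)) hq).le)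
      (Finset.mem_range.2 (show l < k - 1 by omega))
    have h2 := (div_le_one hq).2 hle
    have h3 := neg_abs_le a
    linarith
  · refine le_max_of_le_right ?_
    obtain ⟨q, rfl⟩ : ∃ q, k = q + 1 := ⟨k - 1, by omega⟩
    simp only [Nat.add_sub_cancel] at *
    have hch (j : ℕ) (hj : j ≤ q + 1) : (0 : ℝ) < n.choose j := by
      exact_mod_cast Nat.choose_pos (by omega)
    have hpos' : ∀ j ≤ q + 1, 0 < esymmVec n j lam := by
      intro j hj
      rcases Nat.lt_or_ge q j with h | h
      · rw [show j = q + 1 by omega]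
        exact hq.trans hgt
      · exact hpos j h
    have c0 := hch l (by omega)
    have cq := hch q (by omega)
    have ck := hch (q + 1) le_rfl
    have main := le_pow_mul_of_logConcave (fun j => esymmVec n j lam / n.choose j)
      (n.choose (q + 1) / n.choose q) q (fun j hj => div_pos (hpos' j hj) (hch j hj))
      (by
        have e : (n.choose (q + 1) / n.choose q : ℝ) *
            (esymmVec n (q + 1) lam / n.choose (q + 1)) =
            esymmVec n (q + 1) lam / n.choose q := by field_simp
        rw [e]
        gcongr)
      (fun i hi => esymmVec_newton n i (by omega) lam) l (by omega)
    rw [div_le_iff₀ c0] at main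
    rw [div_le_iff₀ hq]
    refine main.trans_eq ?_
    rw [show q + 1 - l = q - l + 1 by omega, div_pow, pow_succ]
    field_simp
end
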